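/- For all integers r, s, k with 1 ≤ r ≤ s and 0 ≤ k ≤ r−1, the identity of integers C(r+s−k−1, k) · D_{k+1}(r, s) = C(r+s−2k−2, s−k−1) · D_k(r,s) holds. -/

import Mathlib

/-!
Put `a = r - k` and `b = s - k`, so that `D_k` is the determinant of the Toeplitz matrix
`C(a + b, a + j - i)`. Multiplying it on the left by the unitriangular Pascal matrix turns its
entries into `C(a + b + i, a + j)`, by Vandermonde's convolution. Up to the row factors
`(a + b + i)! / (b + i)!` and the column factors `1 / (a + j)!`, these are the falling factorials
of length `j` of `b + i`, that is, monic polynomials of degree `j` evaluated at consecutive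
integers, so that only the Vandermonde determinant `0! 1! ⋯ (k - 1)!` remains. With
`G(n) = 0! 1! ⋯ (n - 1)!` this is MacMahon's formula
`D_k = G(a) G(b) G(k) G(a + b + k) / (G(a + b) G(a + k) G(b + k))`.
Passing from `(a + 1, b + 1, k)` to `(a, b, k + 1)` changes neither `a + k` nor `b + k`, and what
is left of the quotient of the two formulas is a quotient of two binomial coefficients.
-/

/-- The `k × k` integer matrix whose `(i, j)` entry is the binomial coefficient
`C(r + s - 2k, s + i - j - k)`, where `C(a, b) = 0` if `b < 0` or `b > a`. -/
def Dmat (r s k : ℕ) : Matrix (Fin k) (Fin k) ℤ :=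
  Matrix.of fun i j =>
    if (j : ℕ) + k ≤ s + (i : ℕ) then
      ((r + s - 2 * k).choose (s + (i : ℕ) - (j : ℕ) - k) : ℤ)
    else 0

/-- The determinant `D_k(r, s)`. -/
def Ddet (r s k : ℕ) : ℤ := (Dmat r s k).det

open Finset Matrix
open scoped Nat

/-- The product `0! 1! ⋯ (n - 1)!`, the value at `n + 1` of Barnes' `G`-function, in terms of which
the determinants below are evaluated. It is `Nat.superFactorial (n - 1)` for `0 < n`; the index is
shifted so that the empty product is `factorialProd 0`. -/
def factorialProd (n : ℕ) : ℕ := ∏ i ∈ range n, i !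

lemma factorialProd_succ (n : ℕ) : factorialProd (n + 1) = factorialProd n * n ! :=
  prod_range_succ _ n

lemma factorialProd_ne_zero (n : ℕ) : factorialProd n ≠ 0 :=
  prod_ne_zero_iff.2 fun i _ => i.factorial_ne_zero

lemma factorialProd_mul_prod_fin (c k : ℕ) :
    factorialProd c * ∏ i : Fin k, (c + i)! = factorialProd (c + k) := by
  rw [Fin.prod_univ_eq_prod_range fun i => (c + i)!]
  exact (prod_range_add _ c k).symm

lemma det_vandermonde_natCast_add (R : Type*) [CommRing R] (c k : ℕ) :
    (vandermonde fun i : Fin k => ((c + i : ℕ) : R)).det = factorialProd k := by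
  simp only [Nat.cast_add, add_comm (c : R), det_vandermonde_add]
  cases k with
  | zero => simp [factorialProd]
  | succ n =>
    rw [det_vandermonde_id_eq_superFactorial, factorialProd, Nat.prod_range_succ_factorial]

lemma det_descFactorial_eq_det_vandermonde (R : Type*) [CommRing R] {k : ℕ} (v : Fin k → ℕ) :
    (of fun i j : Fin k => ((v i).descFactorial j : R)).det =
      (vandermonde fun i => (v i : R)).det := by
  -- `descPochhammer_natDegree` requires a domain, hence the detour through `ℤ`.
  have h_int : (of fun i j : Fin k => ((v i).descFactorial j : ℤ)).det =
      (vandermonde fun i => (v i : ℤ)).det := by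
    simp only [← descPochhammer_eval_eq_descFactorial]
    exact (det_eval_matrixOfPolynomials_eq_det_vandermonde _ (fun j => descPochhammer ℤ j)
      (fun j => descPochhammer_natDegree ℤ j) fun j => monic_descPochhammer ℤ j).symm
  simpa [Int.cast_det, Matrix.map, vandermonde] using congrArg (Int.cast : ℤ → R) h_int

/-- The lower triangular Pascal matrix `C(i, j)`; multiplication by it on the left performs
Vandermonde's convolution on the columns of a matrix of binomial coefficients. -/
def pascalMatrix (R : Type*) [NatCast R] (k : ℕ) : Matrix (Fin k) (Fin k) R :=
  of fun i j => ((i : ℕ).choose j : R)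

lemma det_pascalMatrix (R : Type*) [CommRing R] (k : ℕ) : (pascalMatrix R k).det = 1 := by
  rw [det_of_isLowerTriangular]
  · simp [pascalMatrix]
  · intro i j (hij : i < j)
    simp [pascalMatrix, Nat.choose_eq_zero_of_lt hij]

lemma sum_range_choose_mul_choose_sub {i k : ℕ} (hik : i < k) (n c : ℕ) :
    ∑ l ∈ range k, i.choose l * (if l ≤ c then n.choose (c - l) else 0) = (n + i).choose c := by
  rw [add_comm n i, Nat.add_choose_eq, Nat.sum_antidiagonal_eq_sum_range_succ_mk]
  simp only [mul_ite, mul_zero, ← sum_filter]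
  refine sum_subset (fun l hl => ?_) fun l hl hlk => ?_
  · grind
  · rw [Nat.choose_eq_zero_of_lt (by grind : i < l), zero_mul]

lemma Dmat_add_add_apply (a b k : ℕ) (i j : Fin k) :
    Dmat (a + k) (b + k) k i j =
      if (i : ℕ) ≤ a + j then ((a + b).choose (a + j - i) : ℤ) else 0 := by
  have h_top : a + k + (b + k) - 2 * k = a + b := by omega
  simp only [Dmat, of_apply, h_top]
  -- If just one of the two conditions holds, its binomial has lower index exceeding `a + b`.
  split_ifs with hj hi hi
  · exact congrArg Nat.cast (Nat.choose_symm_of_eq_add (by omega))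
  · rw [Nat.choose_eq_zero_of_lt (by omega), Nat.cast_zero]
  · rw [Nat.choose_eq_zero_of_lt (by omega), Nat.cast_zero]
  · rfl

lemma pascalMatrix_mul_Dmat (a b k : ℕ) :
    pascalMatrix ℤ k * Dmat (a + k) (b + k) k =
      of fun i j : Fin k => ((a + b + i).choose (a + j) : ℤ) := by
  ext i j
  simp only [Matrix.mul_apply, Dmat_add_add_apply, pascalMatrix, of_apply]
  rw [← sum_range_choose_mul_choose_sub i.isLt, ← Fin.sum_univ_eq_sum_range fun l =>
    (i : ℕ).choose l * if l ≤ a + j then (a + b).choose (a + j - l) else 0]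
  push_cast
  rfl

lemma Ddet_add_add_eq_det_choose (a b k : ℕ) :
    Ddet (a + k) (b + k) k =
      (of fun i j : Fin k => ((a + b + i).choose (a + j) : ℤ)).det := by
  rw [← pascalMatrix_mul_Dmat, det_mul, det_pascalMatrix, one_mul, Ddet]

lemma factorial_mul_choose_add (a m j : ℕ) :
    m ! * ((a + j)! * (a + m).choose (a + j)) = (a + m)! * m.descFactorial j := by
  rcases le_or_gt j m with hj | hj
  · obtain ⟨d, rfl⟩ := Nat.exists_eq_add_of_le hj
    have h_choose := Nat.add_choose_mul_factorial_mul_factorial d (a + j)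
    have h_desc := Nat.factorial_mul_descFactorial hj
    rw [Nat.add_sub_cancel_left] at h_desc
    rw [show a + (j + d) = d + (a + j) by ring, ← h_choose, ← h_desc]
    ring
  · rw [Nat.choose_eq_zero_of_lt (by omega), Nat.descFactorial_of_lt hj, mul_zero, mul_zero,
      mul_zero]

lemma prod_factorial_mul_det_choose (a b k : ℕ) :
    (∏ i : Fin k, ((b + i)! : ℤ)) * ((∏ j : Fin k, ((a + j)! : ℤ)) *
        (of fun i j : Fin k => ((a + b + i).choose (a + j) : ℤ)).det) =
      (∏ i : Fin k, ((a + b + i)! : ℤ)) * factorialProd k := by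
  rw [← det_vandermonde_natCast_add ℤ b, ← det_descFactorial_eq_det_vandermonde,
    ← det_mul_row, ← det_mul_column, ← det_mul_column]
  congr 1
  ext i j
  simp only [of_apply, add_assoc]
  exact_mod_cast factorial_mul_choose_add a (b + i) j

/-- MacMahon's box formula, cleared of denominators. -/
lemma factorialProd_mul_Ddet (a b k : ℕ) :
    (factorialProd (a + b) * factorialProd (a + k) * factorialProd (b + k) : ℤ) *
        Ddet (a + k) (b + k) k =
      factorialProd a * factorialProd b * factorialProd k * factorialProd (a + b + k) := by
  have h_det := prod_factorial_mul_det_choose a b k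
  rw [← Ddet_add_add_eq_det_choose] at h_det
  simp only [← factorialProd_mul_prod_fin _ k]
  push_cast
  linear_combination
    (factorialProd a * factorialProd b * factorialProd (a + b) : ℤ) * h_det

lemma factorial_mul_Ddet_succ (a b k : ℕ) :
    ((a + b)! * (a + b + 1)! * k ! : ℤ) * Ddet (a + 1 + k) (b + 1 + k) k =
      (a + b + 1 + k)! * a ! * b ! * Ddet (a + 1 + k) (b + 1 + k) (k + 1) := by
  have h_k := factorialProd_mul_Ddet (a + 1) (b + 1) k
  have h_succ := factorialProd_mul_Ddet a b (k + 1)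
  rw [show a + (k + 1) = a + 1 + k by ring, show b + (k + 1) = b + 1 + k by ring,
    show a + b + (k + 1) = a + b + 1 + k by ring, factorialProd_succ k] at h_succ
  rw [show a + 1 + (b + 1) = a + b + 1 + 1 by ring,
    show a + b + 1 + 1 + k = a + b + 1 + k + 1 by ring, factorialProd_succ (a + b + 1 + k),
    factorialProd_succ (a + b + 1), factorialProd_succ (a + b), factorialProd_succ a,
    factorialProd_succ b] at h_k
  push_cast at h_k h_succ
  have h_ne : (factorialProd (a + b) * factorialProd (a + 1 + k) * factorialProd (b + 1 + k) : ℤ)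
      ≠ 0 := by
    simp [factorialProd_ne_zero]
  apply mul_left_cancel₀ h_ne
  linear_combination (k ! : ℤ) * h_k - ((a + b + 1 + k)! * a ! * b ! : ℤ) * h_succ

theorem stmt_15_general {r s k : ℕ} (hkr : k < r) (hks : k < s) :
    ((r + s - k - 1).choose k : ℤ) * Ddet r s (k + 1) =
      ((r + s - 2 * k - 2).choose (s - k - 1) : ℤ) * Ddet r s k := by
  obtain ⟨a, rfl⟩ : ∃ a, r = a + 1 + k := ⟨r - (k + 1), by omega⟩
  obtain ⟨b, rfl⟩ : ∃ b, s = b + 1 + k := ⟨s - (k + 1), by omega⟩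
  rw [show a + 1 + k + (b + 1 + k) - k - 1 = a + b + 1 + k by omega,
    show a + 1 + k + (b + 1 + k) - 2 * k - 2 = a + b by omega,
    show b + 1 + k - k - 1 = b by omega]
  have h_left : ((a + b + 1 + k).choose k * (a + b + 1)! * k ! : ℤ) = (a + b + 1 + k)! :=
    mod_cast Nat.add_choose_mul_factorial_mul_factorial (a + b + 1) k
  have h_right : ((a + b).choose b * a ! * b ! : ℤ) = (a + b)! :=
    mod_cast Nat.add_choose_mul_factorial_mul_factorial a b
  have h_ratio := factorial_mul_Ddet_succ a b k
  have h_ne : ((a + b + 1)! * k ! * a ! * b ! : ℤ) ≠ 0 := by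
    simp [Nat.factorial_ne_zero]
  apply mul_left_cancel₀ h_ne
  linear_combination (a ! * b ! * Ddet (a + 1 + k) (b + 1 + k) (k + 1) : ℤ) * h_left
    - ((a + b + 1)! * k ! * Ddet (a + 1 + k) (b + 1 + k) k : ℤ) * h_right - h_ratio

/-- `C(r+s−k−1, k) · D_{k+1}(r, s) = C(r+s−2k−2, s−k−1) · D_k(r,s)`. -/
theorem stmt_15 (r s k : ℕ) (hr : 1 ≤ r) (hrs : r ≤ s) (hkr : k ≤ r - 1) :
    ((r + s - k - 1).choose k : ℤ) * Ddet r s (k + 1) =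
      ((r + s - 2 * k - 2).choose (s - k - 1) : ℤ) * Ddet r s k :=
  stmt_15_general (by omega) (by omega)
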